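/- (Propagation of the Lohner derivative representation.) Let f : ℝ^n → ℝ^n be a C^∞ map with identically vanishing third derivative, and let ℋ = (H_1, …, H_n) with H_i = ∇²f_i the constant Hessians. Let x_0, b, r ∈ ℝ^n, let A, X_0, R be n×n real matrices, and let 𝒜 = (𝒜_1, …, 𝒜_n) be a sequence of n×n real matrices. Set x = x_0 + Ab + r and X = X_0 + b^T𝒜 + R. Then Df(x)·X = Df(x_0)X_0 + b^T( Df(x_0)∗𝒜 + A^Tℋ X_0 ) + r^Tℋ X_0 + Df(x_0) R + ((Ab + r)^Tℋ)(b^T𝒜 + R), where for a sequence of matrices 𝒜, b^T𝒜 is the matrix with m-th row b^T𝒜_m, B∗𝒜 = (Σ_i B_{1i}𝒜_i, …, Σ_i B_{ni}𝒜_i), A^Tℋ X_0 denotes the sequence (A^T H_m X_0)_m, and r^Tℋ X_0 = (r^Tℋ)X_0. -/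

import Mathlib

open Matrix

/-- For a vector `b` and a sequence `𝒜 = (𝒜_1, …, 𝒜_n)` of `n × n` matrices, `bTA b 𝒜` is
the `n × n` matrix whose `m`-th row is `bᵀ 𝒜_m`, i.e. `(bTA b 𝒜)_{mk} = Σ_j b_j (𝒜_m)_{jk}`. -/
def bTA {n : ℕ} (b : Fin n → ℝ) (A : Fin n → Matrix (Fin n) (Fin n) ℝ) :
    Matrix (Fin n) (Fin n) ℝ :=
  Matrix.of fun m k => ∑ j, b j * A m j k

/-- For a matrix `B` and a sequence `𝒜` of matrices, `B ∗ 𝒜` is the sequence with `m`-th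
entry `Σ_i B_{mi} 𝒜_i`. -/
def starA {n : ℕ} (B : Matrix (Fin n) (Fin n) ℝ) (A : Fin n → Matrix (Fin n) (Fin n) ℝ) :
    Fin n → Matrix (Fin n) (Fin n) ℝ :=
  fun m => ∑ i, B m i • A i

/-- The Jacobian matrix of `f : ℝⁿ → ℝⁿ` at a point. -/
noncomputable def jacobian {n : ℕ} (f : (Fin n → ℝ) → (Fin n → ℝ)) (z : Fin n → ℝ) :
    Matrix (Fin n) (Fin n) ℝ :=
  Matrix.of fun i j => fderiv ℝ f z (Pi.single j 1) i

theorem bTA_add_left {n : ℕ} (u v : Fin n → ℝ) (A : Fin n → Matrix (Fin n) (Fin n) ℝ) :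
    bTA (u + v) A = bTA u A + bTA v A := by
  ext m k
  simp [bTA, add_mul, Finset.sum_add_distrib]

theorem bTA_add_right {n : ℕ} (u : Fin n → ℝ) (A B : Fin n → Matrix (Fin n) (Fin n) ℝ) :
    bTA u (fun m => A m + B m) = bTA u A + bTA u B := by
  ext m k
  simp [bTA, mul_add, Finset.sum_add_distrib]

theorem bTA_starA {n : ℕ} (b : Fin n → ℝ) (J : Matrix (Fin n) (Fin n) ℝ)
    (A : Fin n → Matrix (Fin n) (Fin n) ℝ) :
    bTA b (starA J A) = J * bTA b A := by
  ext m k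
  simp only [bTA, starA, Matrix.of_apply, Matrix.mul_apply, Matrix.sum_apply, Matrix.smul_apply,
    smul_eq_mul, Finset.mul_sum]
  rw [Finset.sum_comm]
  exact Finset.sum_congr rfl fun i _ => Finset.sum_congr rfl fun j _ => by ring

theorem bTA_row {n : ℕ} (b : Fin n → ℝ) (A : Fin n → Matrix (Fin n) (Fin n) ℝ) (m k : Fin n) :
    bTA b A m k = (b ᵥ* A m) k := rfl

theorem bTA_transpose {n : ℕ} (b : Fin n → ℝ) (A X : Matrix (Fin n) (Fin n) ℝ)
    (H : Fin n → Matrix (Fin n) (Fin n) ℝ) :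
    bTA b (fun m => Aᵀ * H m * X) = bTA (A *ᵥ b) H * X := by
  ext m k
  rw [bTA_row, ← Matrix.vecMul_vecMul, ← Matrix.vecMul_vecMul, Matrix.vecMul_transpose]
  rfl

theorem jacobian_add {n : ℕ} (f : (Fin n → ℝ) → (Fin n → ℝ))
    (hf : ContDiff ℝ (⊤ : ℕ∞) f)
    (H : Fin n → Matrix (Fin n) (Fin n) ℝ)
    (hH : ∀ (x u v : Fin n → ℝ) (m : Fin n),
      iteratedFDeriv ℝ 2 f x ![u, v] m = u ⬝ᵥ (H m *ᵥ v))
    (x0 u : Fin n → ℝ) : jacobian f (x0 + u) = jacobian f x0 + bTA u H := by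
  have hd : Differentiable ℝ (fderiv ℝ f) :=
    (hf.fderiv_right (m := 1) (by norm_cast)).differentiable (by norm_num)
  have h2 : ∀ x u v m, fderiv ℝ (fderiv ℝ f) x u v m = u ⬝ᵥ (H m *ᵥ v) := by
    intro x u v m
    rw [← hH x u v m, iteratedFDeriv_two_apply]
    rfl
  have hc : ∀ x, fderiv ℝ (fderiv ℝ f) x = fderiv ℝ (fderiv ℝ f) x0 := by
    intro x
    ext u v m
    rw [h2, h2]
  have hk := is_const_of_fderiv_eq_zero (𝕜 := ℝ)
    (f := fun z => fderiv ℝ f z - fderiv ℝ (fderiv ℝ f) x0 z)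
    (hd.sub (fderiv ℝ (fderiv ℝ f) x0).differentiable)
    (fun z => by
      rw [fderiv_fun_sub (hd z) (fderiv ℝ (fderiv ℝ f) x0).differentiableAt, hc z,
        ContinuousLinearMap.fderiv, sub_self]) (x0 + u) x0
  have hk' : fderiv ℝ f (x0 + u) = fderiv ℝ f x0 + fderiv ℝ (fderiv ℝ f) x0 u := by
    simp only [map_add] at hk
    rw [sub_eq_iff_eq_add] at hk
    rw [hk]
    abel
  ext i j
  simp only [jacobian, Matrix.of_apply, Matrix.add_apply, hk']
  rw [ContinuousLinearMap.add_apply, Pi.add_apply, h2]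
  simp [bTA, dotProduct]

/-- Propagation of the Lohner derivative representation (equation (4.13) of
the paper).  For a quadratic map `f` with constant Hessians `ℋ = (H_1, …, H_n)`, with
`x = x₀ + Ab + r` and `X = X₀ + bᵀ𝒜 + R`,
`Df(x)·X = Df(x₀)X₀ + bᵀ(Df(x₀)∗𝒜 + Aᵀℋ X₀) + rᵀℋ X₀ + Df(x₀) R + ((Ab + r)ᵀℋ)(bᵀ𝒜 + R)`. -/
theorem lohner_derivative_propagation
    {n : ℕ} (f : (Fin n → ℝ) → (Fin n → ℝ))
    (hf : ContDiff ℝ (⊤ : ℕ∞) f)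
    (h3 : ∀ x, iteratedFDeriv ℝ 3 f x = 0)
    (H : Fin n → Matrix (Fin n) (Fin n) ℝ)
    (hH : ∀ (x u v : Fin n → ℝ) (m : Fin n),
      iteratedFDeriv ℝ 2 f x ![u, v] m = u ⬝ᵥ (H m *ᵥ v))
    (x0 b r : Fin n → ℝ) (A X0 R : Matrix (Fin n) (Fin n) ℝ)
    (𝒜 : Fin n → Matrix (Fin n) (Fin n) ℝ) :
    jacobian f (x0 + A *ᵥ b + r) * (X0 + bTA b 𝒜 + R) =
      jacobian f x0 * X0 +
      bTA b (fun m => starA (jacobian f x0) 𝒜 m + Aᵀ * H m * X0) +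
      bTA r H * X0 +
      jacobian f x0 * R +
      bTA (A *ᵥ b + r) H * (bTA b 𝒜 + R) := by
  rw [add_assoc x0, jacobian_add f hf H hH, bTA_add_right, bTA_transpose, bTA_add_left]
  rw [show bTA b (fun m => starA (jacobian f x0) 𝒜 m) = _ from bTA_starA b (jacobian f x0) 𝒜]
  simp only [add_mul, mul_add]
  abel
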